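/- Let H be a finite-dimensional non-cosemisimple Hopf algebra with coradical H₀ ≅ k[G] ⊕ M*(n₁,k) ⊕ ... ⊕ M*(n_t,k), 2 ≤ n₁ ≤ ... ≤ n_t, such that H has no non-trivial skew-primitive elements. Then dim H > (1+2n₁)|G| + Σᵢ nᵢ². -/

import Mathlib

/-!
The argument takes place in the convolution algebra `A = H*`, whose two-sided ideals are the
annihilators of subcoalgebras of `H` (`ann`, `coann`). The annihilator `I` of the coradical is
nilpotent, `A/I` is the product of one copy of `k` for each group-like `g` (evaluation at `g`) and
of the matrix blocks dual to the `C i`, and the bound amounts to `dim I > 2 n₁ |G|`.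

* `H*` has a nonzero left integral `Λ` (`exists_int`, from the structure theorem for the Hopf module
  `H*`), unique up to scalars (`IsInt.unique`), so `A` acts on `Λ` from the right by evaluation at a
  group-like `α`. Translating by a group-like `g` yields `L ≠ 0` with `a L = a(g) L` and
  `L a = a(g α) L` (`exists_translate`). Thus every one-dimensional block has a left eigenvector
  and a right eigenvector in `A`. If `H` is not cosemisimple, then `Λ(1) = 0` by Maschke
  (`IsInt.maschke`), and then all translates `L` lie in `I`.
* Let `e_g` lift the idempotent of the block of `g`. If `e_g I ⊆ I²`, the equation `e_g L = L` would
  put `L` in all powers of the nilpotent ideal `I`; so `e_g` acts nontrivially on `I/I²` from the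
  left, and likewise from the right.
* A functional on `e_g I e_h` modulo `I²` would produce a nontrivial skew-primitive element, so
  `e_g I e_h ⊆ I²` for all group-likes `g`, `h` (`mul_mul_mem_sq`). Hence `e_g (I/I²)` is a nonzero
  right module over the matrix blocks only, of dimension at least `n₁`; the same holds for
  `(I/I²) e_g`, and these `2|G|` subspaces of `I/I²` are independent (`count_rank`).
* The inequality is strict since a translate `L` satisfies `L = e_g L e_h ∈ I²`, so `I² ≠ 0`
  (`count`).
-/

open TensorProduct

/-- A submodule `C` of a coalgebra is a subcoalgebra if `Δ(C) ⊆ C ⊗ C`. -/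
def IsSubcoalgebra (k : Type*) [CommRing k] {H : Type*} [AddCommGroup H] [Module k H]
    [Coalgebra k H] (C : Submodule k H) : Prop :=
  ∀ c ∈ C, Coalgebra.comul (R := k) c ∈ LinearMap.range (TensorProduct.map C.subtype C.subtype)

/-- A subcoalgebra is simple if it is nonzero and has no proper nonzero subcoalgebras. -/
def IsSimpleSubcoalgebra (k : Type*) [CommRing k] {H : Type*} [AddCommGroup H] [Module k H]
    [Coalgebra k H] (C : Submodule k H) : Prop :=
  IsSubcoalgebra k C ∧ C ≠ ⊥ ∧
    ∀ C' : Submodule k H, C' ≤ C → IsSubcoalgebra k C' → C' = ⊥ ∨ C' = C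

/-- The coradical of a coalgebra: the sum of all its simple subcoalgebras. -/
noncomputable def Coradical (k : Type*) [CommRing k] (H : Type*) [AddCommGroup H] [Module k H]
    [Coalgebra k H] : Submodule k H :=
  sSup {C : Submodule k H | IsSimpleSubcoalgebra k C}

/-! ### The convolution algebra of a coalgebra -/

namespace BD
open Coalgebra HopfAlgebra WithConv

/-- The convolution algebra `H*`. -/
abbrev Conv (k H : Type*) [Field k] [AddCommGroup H] [Module k H] := WithConv (H →ₗ[k] k)

section Coalg
variable {k H : Type*} [Field k] [AddCommGroup H] [Module k H]

/-- The pairing of `a ⊗ b` with an element of `H ⊗ H`. -/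
noncomputable def pair (a b : Conv k H) : H ⊗[k] H →ₗ[k] k :=
  LinearMap.mul' k k ∘ₗ TensorProduct.map a.ofConv b.ofConv

@[simp] lemma pair_tmul (a b : Conv k H) (x y : H) : pair a b (x ⊗ₜ y) = a x * b y := rfl

instance [FiniteDimensional k H] : FiniteDimensional k (Conv k H) :=
  (WithConv.linearEquiv k (H →ₗ[k] k)).symm.finiteDimensional

lemma conv_ext {a b : Conv k H} (h : ∀ x, a x = b x) : a = b := by
  ext x; exact h x

lemma eq_of_forall_apply {x y : H} (h : ∀ a : Conv k H, a x = a y) : x = y := by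
  rw [← sub_eq_zero, ← Module.forall_dual_apply_eq_zero_iff k]
  intro f
  have := h (toConv f)
  simpa [sub_eq_zero] using this

lemma eq_of_forall_pair [FiniteDimensional k H] {s t : H ⊗[k] H}
    (h : ∀ a b : Conv k H, pair a b s = pair a b t) : s = t := by
  let B := Module.finBasis k H
  apply (B.tensorProduct B).repr.injective
  ext ⟨i, j⟩
  have key : ∀ s : H ⊗[k] H,
      (B.tensorProduct B).repr s (i, j) = pair (toConv (B.coord i)) (toConv (B.coord j)) s := by
    intro s
    induction s with
    | zero => simp
    | add x y hx hy => simp [hx, hy]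
    | tmul x y => simp [mul_comm]
  rw [key, key, h]

lemma conv_sum_apply {ι : Type*} (s : Finset ι) (a : ι → Conv k H) (x : H) :
    (∑ i ∈ s, a i) x = ∑ i ∈ s, a i x := by
  change (WithConv.linearEquiv k (H →ₗ[k] k) (∑ i ∈ s, a i)) x = _
  rw [map_sum, LinearMap.sum_apply]; rfl

lemma conv_eq_sum {ι : Type*} [Fintype ι] (B : Module.Basis ι k H) (a : Conv k H) :
    a = ∑ i, a (B i) • toConv (B.coord i) := by
  apply conv_ext
  intro x
  conv_lhs => rw [← B.sum_repr x]
  rw [conv_sum_apply, map_sum]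
  exact Finset.sum_congr rfl fun i _ => by simp [mul_comm]

variable [Coalgebra k H]

lemma mul_apply_eq_pair (a b : Conv k H) (x : H) : (a * b) x = pair a b (comul x) := rfl

/-- The right action of `f` in the convolution algebra on `H`, `x ↦ f(x₁) x₂`. -/
noncomputable def act (f : Conv k H) : H →ₗ[k] H :=
  (TensorProduct.lid k H).toLinearMap ∘ₗ f.ofConv.rTensor H ∘ₗ comul

lemma apply_act (a f : Conv k H) (x : H) : a (act f x) = (f * a) x := by
  rw [mul_apply_eq_pair, act]
  simp only [LinearMap.comp_apply]
  generalize comul (R := k) x = s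
  induction s with
  | zero => simp
  | add x y hx hy => simp_all
  | tmul x y => simp

lemma one_apply' (x : H) : (1 : Conv k H) x = counit (R := k) x := rfl

lemma mul_apply_of_grouplike (a b : Conv k H) {g : H}
    (hg : comul (R := k) g = g ⊗ₜ[k] g) : (a * b) g = a g * b g := by
  rw [mul_apply_eq_pair, hg, pair_tmul]

/-- Dual bases: `Σ eᵢ ⊗ act (eⁱ) x = Δ x`. -/
lemma comul_eq_sum {ι : Type*} [Fintype ι] (B : Module.Basis ι k H) (x : H) :
    comul (R := k) x = ∑ i, B i ⊗ₜ[k] act (toConv (B.coord i)) x := by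
  simp only [act, LinearMap.comp_apply]
  generalize comul (R := k) x = s
  induction s with
  | zero => simp
  | add x y hx hy =>
    simp only [map_add, tmul_add, Finset.sum_add_distrib]
    rw [← hx, ← hy]
  | tmul x y =>
    conv_lhs => rw [← B.sum_repr x]
    rw [TensorProduct.sum_tmul]
    simp [TensorProduct.smul_tmul']

/-- The canonical element `Σ eᵢ ⊗ eⁱ` intertwines an operator and its transpose. -/
lemma sum_dual_comp {ι X : Type*} [Fintype ι] [AddCommGroup X] [Module k X]
    (B : Module.Basis ι k H) (c : Conv k H) (Q : Conv k H →ₗ[k] H →ₗ[k] X) :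
    ∑ i, Q (c * toConv (B.coord i)) (B i) = ∑ i, Q (toConv (B.coord i)) (act c (B i)) := by
  have h1 : ∀ i, c * toConv (B.coord i) =
      ∑ j, (c * toConv (B.coord i)) (B j) • toConv (B.coord j) := fun i => conv_eq_sum B _
  have h2 : ∀ j, act c (B j) = ∑ i, (c * toConv (B.coord i)) (B j) • B i := by
    intro j
    conv_lhs => rw [← B.sum_repr (act c (B j))]
    refine Finset.sum_congr rfl fun i _ => ?_
    rw [← apply_act]; rfl
  simp_rw [h2]
  conv_lhs => enter [2, i]; rw [h1]
  simp only [map_sum, LinearMap.sum_apply, map_smul, LinearMap.smul_apply]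
  rw [Finset.sum_comm]

/-- The canonical element turns comultiplication into convolution. -/
lemma sum_comul_dual {ι X : Type*} [Fintype ι] [AddCommGroup X] [Module k X]
    (B : Module.Basis ι k H) (Q : H ⊗[k] H →ₗ[k] Conv k H →ₗ[k] X) :
    ∑ i, Q (comul (B i)) (toConv (B.coord i)) =
      ∑ i, ∑ j, Q (B i ⊗ₜ B j) (toConv (B.coord i) * toConv (B.coord j)) := by
  have h1 : ∀ l, comul (R := k) (B l) =
      ∑ i, ∑ j, (toConv (B.coord i) * toConv (B.coord j)) (B l) • (B i ⊗ₜ[k] B j) := by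
    intro l
    rw [comul_eq_sum B]
    refine Finset.sum_congr rfl fun i _ => ?_
    conv_lhs => rw [← B.sum_repr (act (toConv (B.coord i)) (B l)), tmul_sum]
    refine Finset.sum_congr rfl fun j _ => ?_
    rw [← apply_act, tmul_smul]; rfl
  simp_rw [h1]
  conv_rhs => enter [2, i, 2, j]; rw [conv_eq_sum B (toConv (B.coord i) * toConv (B.coord j))]
  simp only [map_sum, LinearMap.sum_apply, map_smul, LinearMap.smul_apply]
  rw [Finset.sum_comm]
  refine Finset.sum_congr rfl fun i _ => ?_
  rw [Finset.sum_comm]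

end Coalg
end BD

/-! ### The antipode and convolution -/

namespace BD
open Coalgebra HopfAlgebra WithConv

section Hopf
variable {k H : Type*} [Field k] [Ring H] [HopfAlgebra k H]

/-- Right translation of a functional, `(rt u a) x = a (x u)`. -/
noncomputable def rt (u : H) (a : Conv k H) : Conv k H :=
  toConv (a.ofConv ∘ₗ LinearMap.mulRight k u)

@[simp] lemma rt_apply (u : H) (a : Conv k H) (x : H) : rt u a x = a (x * u) := rfl

/-- Left translation of a functional, `(lt u a) x = a (u x)`. -/
noncomputable def lt (u : H) (a : Conv k H) : Conv k H :=
  toConv (a.ofConv ∘ₗ LinearMap.mulLeft k u)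

@[simp] lemma lt_apply (u : H) (a : Conv k H) (x : H) : lt u a x = a (u * x) := rfl

lemma pair_mul_tmul (a b : Conv k H) (s : H ⊗[k] H) (u v : H) :
    pair a b (s * (u ⊗ₜ v)) = pair (rt u a) (rt v b) s := by
  induction s with
  | zero => simp
  | add x y hx hy => simp [add_mul, hx, hy]
  | tmul x y => simp

lemma pair_tmul_mul (a b : Conv k H) (s : H ⊗[k] H) (u v : H) :
    pair a b ((u ⊗ₜ v) * s) = pair (lt u a) (lt v b) s := by
  induction s with
  | zero => simp
  | add x y hx hy => simp [mul_add, hx, hy]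
  | tmul x y => simp

section antipode
variable {C : Type*} [Ring C] [Algebra k C]

lemma conv_mul_antipode (φ : H →ₐ[k] C) :
    toConv φ.toLinearMap * toConv (φ.toLinearMap ∘ₗ antipode k) = 1 := by
  have h := LinearMap.algHom_comp_convMul_distrib φ (toConv LinearMap.id)
    (toConv (antipode k (A := H)))
  rw [LinearMap.id_mul_antipode] at h
  apply WithConv.ofConv_injective
  refine Eq.trans h.symm ?_
  ext x
  simp [LinearMap.convOne_def]

lemma antipode_conv_mul (φ : H →ₐ[k] C) :
    toConv (φ.toLinearMap ∘ₗ antipode k) * toConv φ.toLinearMap = 1 := by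
  have h := LinearMap.algHom_comp_convMul_distrib φ
    (toConv (antipode k (A := H))) (toConv LinearMap.id)
  rw [LinearMap.antipode_mul_id] at h
  apply WithConv.ofConv_injective
  refine Eq.trans h.symm ?_
  ext x
  simp [LinearMap.convOne_def]

end antipode

/-- `x ↦ x ⊗ 1`. -/
noncomputable abbrev inL (k H : Type*) [Field k] [Ring H] [HopfAlgebra k H] :
    H →ₐ[k] H ⊗[k] H := Algebra.TensorProduct.includeLeft
/-- `x ↦ 1 ⊗ x`. -/
noncomputable abbrev inR (k H : Type*) [Field k] [Ring H] [HopfAlgebra k H] :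
    H →ₐ[k] H ⊗[k] H := Algebra.TensorProduct.includeRight

/-- The comultiplication is the convolution product of the two inclusions. -/
lemma inL_mul_inR : toConv (inL k H).toLinearMap * toConv (inR k H).toLinearMap =
    toConv (Bialgebra.comulAlgHom k H).toLinearMap := by
  apply WithConv.ofConv_injective
  ext x
  change LinearMap.mul' k (H ⊗[k] H) (TensorProduct.map _ _ (comul x)) = comul x
  generalize comul (R := k) x = s
  induction s with
  | zero => simp
  | add x y hx hy => rw [map_add, map_add, hx, hy]
  | tmul x y => simp

lemma comulS_mul_inL :
    toConv ((Bialgebra.comulAlgHom k H).toLinearMap ∘ₗ antipode k) * toConv (inL k H).toLinearMap =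
      toConv ((inR k H).toLinearMap ∘ₗ antipode k) := by
  rw [← mul_one (toConv ((Bialgebra.comulAlgHom k H).toLinearMap ∘ₗ antipode k) *
    toConv (inL k H).toLinearMap), ← conv_mul_antipode (inR k H), mul_assoc,
    ← mul_assoc _ _ (toConv ((inR k H).toLinearMap ∘ₗ antipode k)), inL_mul_inR,
    ← mul_assoc, antipode_conv_mul, one_mul]

lemma comulS_eq :
    toConv ((Bialgebra.comulAlgHom k H).toLinearMap ∘ₗ antipode k) =
      toConv ((inR k H).toLinearMap ∘ₗ antipode k) *
        toConv ((inL k H).toLinearMap ∘ₗ antipode k) := by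
  rw [← comulS_mul_inL, mul_assoc, conv_mul_antipode, mul_one]

lemma inLS_mul_comul :
    toConv ((inL k H).toLinearMap ∘ₗ antipode k) *
      toConv (Bialgebra.comulAlgHom k H).toLinearMap = toConv (inR k H).toLinearMap := by
  rw [← inL_mul_inR, ← mul_assoc, antipode_conv_mul, one_mul]

/-- `1 ⊗ S(z) = Σ Δ(S z₁) (z₂ ⊗ 1)`. -/
lemma one_tmul_antipode {ι : Type*} {z : H} (r : Coalgebra.Repr k z ι) :
    (1 : H) ⊗ₜ[k] antipode k z =
      ∑ i ∈ r.index, comul (antipode k (r.left i)) * (r.right i ⊗ₜ[k] (1 : H)) := by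
  have h := congrArg (fun F => F.ofConv z) (comulS_mul_inL (k := k) (H := H))
  refine Eq.trans ?_ (h.symm.trans (r.convMul_apply _ _))
  rfl

/-- The antipode reverses comultiplication. -/
lemma comul_antipode {ι : Type*} {z : H} (r : Coalgebra.Repr k z ι) :
    comul (R := k) (antipode k z) =
      ∑ i ∈ r.index, antipode k (r.right i) ⊗ₜ[k] antipode k (r.left i) := by
  have h := congrArg (fun F => F.ofConv z) (comulS_eq (k := k) (H := H))
  refine (h.trans (r.convMul_apply _ _)).trans ?_
  exact Finset.sum_congr rfl fun i _ => by simp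

/-- `1 ⊗ z = Σ (S(z₁) ⊗ 1) Δ(z₂)`. -/
lemma one_tmul_eq {ι : Type*} {z : H} (r : Coalgebra.Repr k z ι) :
    (1 : H) ⊗ₜ[k] z =
      ∑ i ∈ r.index, (antipode k (r.left i) ⊗ₜ[k] (1 : H)) * comul (r.right i) := by
  have h := congrArg (fun F => F.ofConv z) (inLS_mul_comul (k := k) (H := H))
  refine Eq.trans ?_ (h.symm.trans (r.convMul_apply _ _))
  rfl

lemma rt_one (a : Conv k H) : rt (1 : H) a = a := conv_ext fun x => by simp

/-- `a(x₁) f(x₂ S(z)) = Σ a(x₁ S(z₁)₁ z₂) f(x₂ S(z₁)₂)`. -/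
lemma mul_rt_antipode {ι : Type*} {z : H} (r : Coalgebra.Repr k z ι) (a f : Conv k H) (x : H) :
    (a * rt (antipode k z) f) x =
      ∑ i ∈ r.index, (rt (r.right i) a * f) (x * antipode k (r.left i)) := by
  have h : (a * rt (antipode k z) f) x =
      pair a f (comul x * ((1 : H) ⊗ₜ[k] antipode k z)) := by
    rw [pair_mul_tmul, rt_one, mul_apply_eq_pair]
  rw [h, one_tmul_antipode r, Finset.mul_sum, map_sum]
  refine Finset.sum_congr rfl fun i _ => ?_
  rw [← mul_assoc, ← Bialgebra.comul_mul, pair_mul_tmul, rt_one, mul_apply_eq_pair]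

lemma mul_rt_antipode_antipode {ι : Type*} {z : H} (r : Coalgebra.Repr k z ι)
    (a f : Conv k H) (x : H) :
    (a * rt (antipode k (antipode k z)) f) x =
      ∑ i ∈ r.index,
        (rt (antipode k (r.left i)) a * f) (x * antipode k (antipode k (r.right i))) := by
  let r' : Coalgebra.Repr k (antipode k z) ι :=
    { index := r.index
      left := fun i => antipode k (r.right i)
      right := fun i => antipode k (r.left i)
      eq := (comul_antipode r).symm }
  exact mul_rt_antipode r' a f x

/-! ### Existence of integrals -/

/-- A left integral in the convolution algebra. -/
def IsInt (Λ : Conv k H) : Prop := ∀ a : Conv k H, a * Λ = a 1 • Λ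

/-- Evaluation of functionals, as a bilinear map. -/
noncomputable def ev (k H : Type*) [Field k] [AddCommGroup H] [Module k H] :
    H →ₗ[k] Conv k H →ₗ[k] k :=
  LinearMap.mk₂ k (fun x a => a x) (by simp) (by simp) (by simp) (by simp)

@[simp] lemma ev_apply (x : H) (a : Conv k H) : ev k H x a = a x := rfl

section existence
variable {ι : Type*} [Fintype ι] (B : Module.Basis ι k H)

/-- The projection of the Hopf module `H*` onto its coinvariants. -/
noncomputable def intProj (f : Conv k H) : Conv k H :=
  ∑ i, rt (antipode k (antipode k (B i))) (toConv (B.coord i) * f)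

/-- `Σ a(x₁ S(x₂)) = a(1) ε(x)`, written with dual bases. -/
lemma sum_rt_antipode_mul (a : Conv k H) :
    ∑ i, rt (antipode k (B i)) a * toConv (B.coord i) = a 1 • 1 := by
  apply conv_ext
  intro x
  rw [conv_sum_apply]
  have h : ∀ i, (rt (antipode k (B i)) a * toConv (B.coord i)) x =
      ∑ j ∈ (ℛ k x).index, a ((ℛ k x).left j *
        antipode k (B.repr ((ℛ k x).right j) i • B i)) := by
    intro i
    rw [(ℛ k x).convMul_apply]
    refine Finset.sum_congr rfl fun j _ => ?_
    simp [mul_comm]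
  simp_rw [h]
  rw [Finset.sum_comm]
  simp_rw [← map_sum, ← Finset.mul_sum, ← map_sum, B.sum_repr]
  rw [sum_mul_antipode_eq_smul]
  simp [mul_comm]

/-- The projection takes values in integrals, by `mul_rt_antipode_antipode` and
`sum_rt_antipode_mul`. -/
lemma isInt_intProj (f : Conv k H) : IsInt (intProj B f) := by
  intro a
  apply conv_ext
  intro x
  let Q : H ⊗[k] H →ₗ[k] Conv k H →ₗ[k] k := TensorProduct.lift <| LinearMap.mk₂ k
    (fun u v => ev k H (x * antipode k (antipode k v)) ∘ₗ
      LinearMap.mulLeft k (rt (antipode k u) a) ∘ₗ LinearMap.mulRight k f)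
    (by
      intro u u' v; ext c
      have : rt (antipode k (u + u')) a = rt (antipode k u) a + rt (antipode k u') a :=
        conv_ext fun y => by simp [mul_add]
      simp only [LinearMap.comp_apply, LinearMap.mulLeft_apply, LinearMap.add_apply]
      rw [this, add_mul, map_add])
    (by
      intro t u v; ext c
      have : rt (antipode k (t • u)) a = t • rt (antipode k u) a :=
        conv_ext fun y => by simp
      simp only [LinearMap.comp_apply, LinearMap.mulLeft_apply, LinearMap.smul_apply]
      rw [this, smul_mul_assoc, map_smul])
    (by
      intro u v v'
      simp only [map_add, mul_add, LinearMap.add_comp])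
    (by
      intro t u v
      simp only [map_smul, mul_smul_comm, LinearMap.smul_comp])
  have hQ : ∀ u v c, Q (u ⊗ₜ v) c =
      (rt (antipode k u) a * (c * f)) (x * antipode k (antipode k v)) := fun u v c => rfl
  have h1 : (a * intProj B f) x = ∑ i, Q (comul (B i)) (toConv (B.coord i)) := by
    rw [intProj, Finset.mul_sum, conv_sum_apply]
    refine Finset.sum_congr rfl fun i _ => ?_
    rw [mul_rt_antipode_antipode (ℛ k (B i)), ← (ℛ k (B i)).eq, map_sum, LinearMap.sum_apply]
    simp_rw [hQ]
  rw [h1, sum_comul_dual, Finset.sum_comm]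
  simp_rw [hQ]
  have h2 : ∀ j, ∑ i, (rt (antipode k (B i)) a *
      (toConv (B.coord i) * toConv (B.coord j) * f)) (x * antipode k (antipode k (B j))) =
      a 1 * (toConv (B.coord j) * f) (x * antipode k (antipode k (B j))) := by
    intro j
    rw [← conv_sum_apply]
    simp_rw [mul_assoc (toConv _) (toConv _) f, ← mul_assoc (rt _ _)]
    rw [← Finset.sum_mul, sum_rt_antipode_mul, smul_mul_assoc, one_mul]
    simp
  simp_rw [h2]
  rw [← Finset.mul_sum]
  change _ = a 1 * (intProj B f) x
  rw [intProj, conv_sum_apply]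
  rfl

/-- The coinvariants generate the Hopf module `H*`. -/
lemma sum_intProj (f : Conv k H) :
    ∑ j, rt (antipode k (B j)) (intProj B (toConv (B.coord j) * f)) = f := by
  apply conv_ext
  intro x
  let T : H ⊗[k] H →ₗ[k] H := LinearMap.mulLeft k x ∘ₗ antipode k ∘ₗ LinearMap.mul' k H ∘ₗ
    (antipode k).rTensor H
  let Q : H ⊗[k] H →ₗ[k] Conv k H →ₗ[k] k := (ev k H ∘ₗ T).compl₂ (LinearMap.mulRight k f)
  have hQ : ∀ u v c, Q (u ⊗ₜ v) c = (c * f) (x * antipode k (antipode k u * v)) :=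
    fun u v c => rfl
  have h1 : (∑ j, rt (antipode k (B j)) (intProj B (toConv (B.coord j) * f))) x =
      ∑ i, ∑ j, Q (B i ⊗ₜ B j) (toConv (B.coord i) * toConv (B.coord j)) := by
    rw [conv_sum_apply, Finset.sum_comm]
    refine Finset.sum_congr rfl fun j _ => ?_
    rw [rt_apply, intProj, conv_sum_apply]
    refine Finset.sum_congr rfl fun i _ => ?_
    rw [hQ, rt_apply, antipode_mul_antidistrib, mul_assoc, mul_assoc]
  rw [h1, ← sum_comul_dual]
  have h2 : ∀ i, Q (comul (B i)) (toConv (B.coord i)) =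
      ((1 : Conv k H) (B i) • toConv (B.coord i) * f) x := by
    intro i
    change (toConv (B.coord i) * f) (x * antipode k (LinearMap.mul' k H
      ((antipode k).rTensor H (comul (B i))))) = _
    rw [mul_antipode_rTensor_comul_apply, smul_mul_assoc, Algebra.algebraMap_eq_smul_one, map_smul,
      antipode_one, mul_smul_comm, mul_one, map_smul]
    rfl
  simp_rw [h2]
  rw [← conv_sum_apply, ← Finset.sum_mul, ← conv_eq_sum, one_mul]

end existence

lemma one_apply_one : (1 : Conv k H) 1 = 1 := by
  rw [one_apply']; exact Bialgebra.counit_one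

/-- If `intProj` vanished identically, `sum_intProj` would force the counit to be zero. -/
lemma exists_int [FiniteDimensional k H] : ∃ Λ : Conv k H, Λ ≠ 0 ∧ IsInt Λ := by
  let B := Module.finBasis k H
  by_contra! hcon
  have h0 : ∀ f, intProj B f = 0 := fun f => by
    by_contra h
    exact hcon _ h (isInt_intProj B f)
  have h := sum_intProj B (1 : Conv k H)
  have h1 : ∀ j, rt (antipode k (B j)) (intProj B (toConv (B.coord j) * 1)) = 0 := fun j => by
    rw [h0]; rfl
  simp_rw [h1] at h
  have h2 := one_apply_one (k := k) (H := H)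
  rw [← h] at h2
  simp at h2

end Hopf
end BD

/-! ### Uniqueness of integrals, the distinguished group-like and Maschke -/

namespace BD
open Coalgebra HopfAlgebra WithConv

section Integral
variable {k H : Type*} [Field k] [Ring H] [HopfAlgebra k H]

lemma lt_one (a : Conv k H) : lt (1 : H) a = a := conv_ext fun x => by simp

lemma counit_act (f : Conv k H) (y : H) : counit (R := k) (act f y) = f y := by
  have h := apply_act (1 : Conv k H) f y
  rwa [mul_one, one_apply'] at h

/-- The invariance of an integral, in the form `Λ(h y₂) f(y₁) = Σ f(S h₁) Λ(h₂ y)`. -/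
lemma IsInt.key {Λ : Conv k H} (hΛ : IsInt Λ) {ι : Type*} {h : H} (r : Coalgebra.Repr k h ι)
    (f : Conv k H) (y : H) :
    Λ (h * act f y) = ∑ i ∈ r.index, f (antipode k (r.left i)) * Λ (r.right i * y) := by
  have h1 : Λ (h * act f y) = pair f Λ (((1 : H) ⊗ₜ[k] h) * comul y) := by
    rw [pair_tmul_mul, lt_one, ← mul_apply_eq_pair, ← apply_act, lt_apply]
  rw [h1, one_tmul_eq r, Finset.sum_mul, map_sum]
  refine Finset.sum_congr rfl fun i _ => ?_
  rw [mul_assoc, ← Bialgebra.comul_mul, pair_tmul_mul, lt_one, ← mul_apply_eq_pair, hΛ]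
  simp

lemma sum_antipode_mul_act {ι : Type*} [Fintype ι] (B : Module.Basis ι k H) (y : H) :
    ∑ i, antipode k (B i) * act (toConv (B.coord i)) y = counit (R := k) y • (1 : H) := by
  have h := mul_antipode_rTensor_comul_apply (R := k) y
  rw [comul_eq_sum B, Algebra.algebraMap_eq_smul_one] at h
  rw [← h]
  simp

/-- A nonzero integral is a faithful functional: the associated bilinear form is
nondegenerate. -/
lemma IsInt.faithful [FiniteDimensional k H] {Λ : Conv k H} (hΛ : IsInt Λ) (h0 : Λ ≠ 0) {y : H}
    (hy : ∀ h : H, Λ (h * y) = 0) : y = 0 := by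
  have hact : ∀ f h, Λ (h * act f y) = 0 := fun f h => by
    rw [hΛ.key (ℛ k h)]
    exact Finset.sum_eq_zero fun i _ => by rw [hy, mul_zero]
  have hε : ∀ z : H, (∀ (f : Conv k H) (h : H), Λ (h * act f z) = 0) → counit (R := k) z = 0 := by
    intro z hz
    by_contra hne
    apply h0
    apply conv_ext
    intro h
    have h1 := congrArg (fun w => Λ (h * w)) (sum_antipode_mul_act (Module.finBasis k H) z)
    simp only [Finset.mul_sum, map_sum, ← mul_assoc, hz, Finset.sum_const_zero] at h1
    simp only [mul_smul_comm, mul_one, map_smul, smul_eq_mul] at h1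
    rcases mul_eq_zero.1 h1.symm with h2 | h2
    · exact absurd h2 hne
    · rw [h2]; rfl
  apply eq_of_forall_apply (k := k)
  intro f
  rw [map_zero, ← counit_act f y]
  apply hε
  intro g h
  rw [hΛ.key (ℛ k h)]
  exact Finset.sum_eq_zero fun i _ => by rw [hact, mul_zero]

/-- The map `H → H*` sending `y` to `Λ(· y)`. -/
noncomputable def rtMap (Λ : Conv k H) : H →ₗ[k] Conv k H where
  toFun y := rt y Λ
  map_add' y z := conv_ext fun x => by simp [mul_add]
  map_smul' c y := conv_ext fun x => by simp

lemma finrank_conv [FiniteDimensional k H] : Module.finrank k (Conv k H) = Module.finrank k H := by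
  rw [(WithConv.linearEquiv k (H →ₗ[k] k)).finrank_eq]
  exact Subspace.dual_finrank_eq

/-- Uniqueness of integrals up to scalars. -/
lemma IsInt.unique [FiniteDimensional k H] {Λ Λ' : Conv k H} (hΛ : IsInt Λ) (h0 : Λ ≠ 0)
    (hΛ' : IsInt Λ') : ∃ c : k, Λ' = c • Λ := by
  have hinj : Function.Injective (rtMap Λ) := by
    rw [injective_iff_map_eq_zero]
    intro y hy
    apply hΛ.faithful h0
    intro h
    have := congrArg (fun a : Conv k H => a h) hy
    simpa [rtMap] using this
  have hsurj : Function.Surjective (rtMap Λ) :=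
    (LinearMap.injective_iff_surjective_of_finrank_eq_finrank finrank_conv.symm).1 hinj
  obtain ⟨y, hy⟩ := hsurj Λ'
  have hy' : ∀ h, Λ (h * y) = Λ' h := fun h => by rw [← hy]; rfl
  have hact : ∀ f : Conv k H, act f y = f 1 • y := by
    intro f
    apply hinj
    apply conv_ext
    intro h
    change Λ (h * act f y) = Λ (h * (f 1 • y))
    rw [hΛ.key (ℛ k h), mul_smul_comm, map_smul, hy']
    have h1 := hΛ'.key (ℛ k h) f 1
    have h2 : act f (1 : H) = f 1 • (1 : H) := by
      simp [act, Algebra.TensorProduct.one_def]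
    rw [h2, mul_smul_comm, mul_one, map_smul] at h1
    rw [h1]
    simp [hy']
  have hy1 : y = counit (R := k) y • (1 : H) := by
    apply eq_of_forall_apply (k := k)
    intro f
    rw [← counit_act f y, hact]
    simp [mul_comm]
  refine ⟨counit (R := k) y, conv_ext fun h => ?_⟩
  rw [← hy' h]
  conv_lhs => rw [hy1]
  simp

/-- Every functional on `H*` is the evaluation at an element of `H`. -/
lemma exists_rep {k H : Type*} [Field k] [AddCommGroup H] [Module k H] [FiniteDimensional k H]
    (φ : Conv k H →ₗ[k] k) : ∃ x : H, ∀ a, φ a = a x := by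
  let ψ : Module.Dual k (Module.Dual k H) :=
    φ ∘ₗ (WithConv.linearEquiv k (H →ₗ[k] k)).symm.toLinearMap
  refine ⟨(Module.evalEquiv k H).symm ψ, fun a => ?_⟩
  have h := Module.apply_evalEquiv_symm_apply (R := k) (M := H) a.ofConv ψ
  exact h.symm

/-- There is a nonzero left integral, and convolution on its right acts through evaluation at a
group-like element (the distinguished group-like). -/
lemma exists_int_modular [FiniteDimensional k H] : ∃ (Λ : Conv k H) (α : H), Λ ≠ 0 ∧ IsInt Λ ∧
    IsGroupLikeElem k α ∧ ∀ a, Λ * a = a α • Λ := by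
  obtain ⟨Λ, h0, hΛ⟩ := exists_int (k := k) (H := H)
  have hr : ∀ a, ∃ c : k, Λ * a = c • Λ := fun a =>
    hΛ.unique h0 fun b => by rw [← mul_assoc, hΛ, smul_mul_assoc]
  obtain ⟨x₀, hx₀⟩ : ∃ x, Λ x ≠ 0 := by
    by_contra! h
    exact h0 (conv_ext h)
  choose χ hχ using hr
  have hχ' : ∀ a, χ a = (Λ x₀)⁻¹ * (Λ * a) x₀ := fun a => by
    rw [hχ]
    change _ = (Λ x₀)⁻¹ * (χ a * Λ x₀)
    field_simp
  obtain ⟨α, hα⟩ := exists_rep (k := k) (H := H)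
    ((Λ x₀)⁻¹ • (ev k H x₀ ∘ₗ LinearMap.mulLeft k Λ))
  have hα' : ∀ a, Λ * a = a α • Λ := fun a => by
    rw [hχ, ← hα, hχ']; rfl
  have hinj : ∀ c d : k, c • Λ = d • Λ → c = d := fun c d h => smul_left_injective k h0 h
  refine ⟨Λ, α, h0, hΛ, ⟨?_, ?_⟩, hα'⟩
  · apply hinj
    rw [← one_apply', ← hα', mul_one, one_smul]
  · apply eq_of_forall_pair
    intro a b
    rw [← mul_apply_eq_pair, pair_tmul]
    apply hinj
    rw [← hα', ← mul_assoc, hα', smul_mul_assoc, hα', smul_smul]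

/-- The map `H → H*` sending `x` to `y ↦ Λ(x S(y))`; for an integral `Λ` it is a map of right
`H*`-modules, where `a` acts on `H` by `x ↦ a(x₁) x₂`. -/
noncomputable def frob (Λ : Conv k H) : H →ₗ[k] Conv k H where
  toFun x := toConv (Λ.ofConv ∘ₗ LinearMap.mulLeft k x ∘ₗ antipode k)
  map_add' y z := conv_ext fun x => by simp [add_mul]
  map_smul' c y := conv_ext fun x => by simp

@[simp] lemma frob_apply (Λ : Conv k H) (x y : H) : frob Λ x y = Λ (x * antipode k y) := rfl

lemma IsInt.frob_act {Λ : Conv k H} (hΛ : IsInt Λ) (a : Conv k H) (x : H) :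
    frob Λ (act a x) = frob Λ x * a := by
  apply conv_ext
  intro z
  have h := mul_rt_antipode (ℛ k z) a Λ x
  rw [← apply_act, rt_apply] at h
  rw [frob_apply, h, (ℛ k z).convMul_apply]
  refine Finset.sum_congr rfl fun i _ => ?_
  rw [hΛ]
  simp [mul_comm]

/-- The Casimir element `Σ eⁱ ⊗ frob Λ eᵢ` multiplies to the scalar `Λ(1)`. -/
lemma sum_dual_mul_frob {ι : Type*} [Fintype ι] (B : Module.Basis ι k H) (Λ : Conv k H) :
    ∑ i, toConv (B.coord i) * frob Λ (B i) = Λ 1 • 1 := by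
  apply conv_ext
  intro x
  rw [conv_sum_apply]
  have h : ∀ i, (toConv (B.coord i) * frob Λ (B i)) x =
      ∑ j ∈ (ℛ k x).index, Λ ((B.repr ((ℛ k x).left j) i • B i) *
        antipode k ((ℛ k x).right j)) := by
    intro i
    rw [(ℛ k x).convMul_apply]
    refine Finset.sum_congr rfl fun j _ => ?_
    simp
  simp_rw [h]
  rw [Finset.sum_comm]
  simp_rw [← map_sum, ← Finset.sum_mul, B.sum_repr]
  rw [sum_mul_antipode_eq_smul]
  simp [mul_comm]

/-- Maschke's theorem for the dual: if an integral does not vanish at `1`, then `H*` has no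
nonzero nil left ideal. -/
lemma IsInt.maschke [FiniteDimensional k H] {Λ : Conv k H} (hΛ : IsInt Λ) (h1 : Λ 1 ≠ 0)
    (I : Submodule k (Conv k H)) (hl : ∀ a, ∀ c ∈ I, a * c ∈ I)
    (hnil : ∀ c ∈ I, IsNilpotent c) : I = ⊥ := by
  obtain ⟨p, hp⟩ := LinearMap.exists_leftInverse_of_injective (K := k) (V := I) (V' := Conv k H)
    I.subtype I.ker_subtype
  let B := Module.finBasis k H
  let π : Conv k H →ₗ[k] Conv k H := I.subtype ∘ₗ p
  have hπ : ∀ c ∈ I, π c = c := fun c hc => by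
    have := LinearMap.congr_fun hp ⟨c, hc⟩
    exact congrArg Subtype.val this
  have hπI : ∀ c, π c ∈ I := fun c => (p c).2
  -- Averaging the projection `π` onto `I` makes it `H*`-linear up to the scalar `Λ 1`; `e` is the
  -- image of `1`, hence a right identity of `I` up to that scalar.
  let e : Conv k H := ∑ i, toConv (B.coord i) * π (frob Λ (B i))
  have heI : e ∈ I := I.sum_mem fun i _ => hl _ _ (hπI _)
  have hce : ∀ c ∈ I, c * e = Λ 1 • c := by
    intro c hc
    have h2 := sum_dual_comp B c ((LinearMap.mul k (Conv k H)).compl₂ (π ∘ₗ frob Λ))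
    simp only [LinearMap.compl₂_apply, LinearMap.comp_apply, LinearMap.mul_apply_apply,
      hΛ.frob_act] at h2
    have h3 : ∀ i, π (frob Λ (B i) * c) = frob Λ (B i) * c := fun i => hπ _ (hl _ _ hc)
    simp only [h3, ← mul_assoc] at h2
    rw [← Finset.sum_mul, sum_dual_mul_frob, smul_mul_assoc, one_mul] at h2
    rw [← h2, Finset.mul_sum]
    simp only [mul_assoc]
  obtain ⟨m, hm⟩ := hnil e heI
  rw [eq_bot_iff]
  intro c hc
  have h4 : ∀ m : ℕ, c * e ^ m = (Λ 1) ^ m • c := by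
    intro m
    induction m with
    | zero => simp
    | succ m ih => rw [pow_succ, ← mul_assoc, ih, smul_mul_assoc, hce c hc, smul_smul, pow_succ]
  have h5 := h4 m
  rw [hm, mul_zero] at h5
  exact (smul_eq_zero.1 h5.symm).resolve_left (pow_ne_zero _ h1)

lemma lt_mul {g : H} (hg : IsGroupLikeElem k g) (a b : Conv k H) :
    lt g (a * b) = lt g a * lt g b := by
  apply conv_ext
  intro x
  rw [lt_apply, mul_apply_eq_pair, Bialgebra.comul_mul, hg.comul_eq_tmul_self, pair_tmul_mul,
    mul_apply_eq_pair]

lemma lt_lt (g h : H) (a : Conv k H) : lt g (lt h a) = lt (h * g) a :=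
  conv_ext fun x => by simp [mul_assoc]

lemma lt_smul (g : H) (c : k) (a : Conv k H) : lt g (c • a) = c • lt g a :=
  rfl

/-- Translating an integral `Λ` by a group-like `g` gives a nonzero functional on which `H*` acts
on the left through evaluation at `g` and on the right through evaluation at `g α`, where `α` is
the distinguished group-like. -/
lemma exists_translate [FiniteDimensional k H] :
    ∃ (Λ : Conv k H) (α : H), IsInt Λ ∧ IsGroupLikeElem k α ∧
      ∀ g : H, IsGroupLikeElem k g → ∃ L : Conv k H, L ≠ 0 ∧ L g = Λ 1 ∧
        (∀ a, a * L = a g • L) ∧ ∀ a, L * a = a (g * α) • L := by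
  obtain ⟨Λ, α, h0, hΛ, hα, hr⟩ := exists_int_modular (k := k) (H := H)
  refine ⟨Λ, α, hΛ, hα, fun g hg => ?_⟩
  have hg' : IsGroupLikeElem k (antipode k g) := hg.antipode
  have e1 : antipode k g * g = 1 := hg.antipode_mul_cancel
  have e2 : g * antipode k g = 1 := hg.mul_antipode_cancel
  have hb : ∀ a : Conv k H, a = lt (antipode k g) (lt g a) := fun a => by
    rw [lt_lt, e2, lt_one]
  refine ⟨lt (antipode k g) Λ, ?_, by simp [e1], ?_, ?_⟩
  · intro h
    apply h0
    have h2 : lt g (lt (antipode k g) Λ) = Λ := by rw [lt_lt, e1, lt_one]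
    rw [← h2, h]; rfl
  · intro a
    conv_lhs => rw [hb a]
    rw [← lt_mul hg', hΛ, lt_smul, lt_apply, mul_one]
  · intro a
    conv_lhs => rw [hb a]
    rw [← lt_mul hg', hr, lt_smul, lt_apply]

end Integral
end BD

/-! ### The dimension count for an algebra with a nilpotent ideal -/

namespace BD

section Counting
variable {k : Type*} [Field k]

/-- The ranges of orthogonal idempotents are independent. -/
lemma finrank_orthogonal {Q X : Type*} [AddCommGroup Q] [Module k Q] [FiniteDimensional k Q]
    [Fintype X] [DecidableEq X] (E : X → Module.End k Q) (hid : ∀ x, E x * E x = E x)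
    (hne : ∀ x y, x ≠ y → E x * E y = 0) :
    ∑ x, Module.finrank k (LinearMap.range (E x)) ≤ Module.finrank k Q := by
  let Φ : ((x : X) → LinearMap.range (E x)) →ₗ[k] Q :=
    ∑ x, (LinearMap.range (E x)).subtype ∘ₗ LinearMap.proj x
  have hΦ : ∀ v, Φ v = ∑ x, (v x : Q) := fun v => by simp [Φ]
  have hfix : ∀ (v : (x : X) → LinearMap.range (E x)) y, E y (Φ v) = v y := by
    intro v y
    rw [hΦ, map_sum, Finset.sum_eq_single y]
    · obtain ⟨w, hw⟩ := (v y).2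
      rw [← hw, ← Module.End.mul_apply, hid]
    · intro x _ hxy
      obtain ⟨w, hw⟩ := (v x).2
      rw [← hw, ← Module.End.mul_apply, hne y x (Ne.symm hxy)]; rfl
    · simp
  have hinj : Function.Injective Φ := by
    intro v w h
    funext y
    apply Subtype.ext
    rw [← hfix v y, h, hfix w y]
  have := LinearMap.finrank_le_finrank_of_injective hinj
  rwa [Module.finrank_pi_fintype] at this

variable {A : Type*} [Ring A] [Algebra k A]

/-- Let `ρ` be a left or right action of `A`, and `T ≠ 0` an operator commuting with it. If the
action on the range of `T` factors through a simple quotient `A/N` of dimension `n²`, then it is a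
faithful action of `A/N`, so that `n² ≤ (rank T)²`. -/
lemma le_finrank_range {Q : Type*} [AddCommGroup Q] [Module k Q] [FiniteDimensional k Q]
    (ρ : A →ₗ[k] Module.End k Q)
    (hρ : (∀ a b, ρ (a * b) = ρ a * ρ b) ∨ (∀ a b, ρ (a * b) = ρ b * ρ a)) (hρ1 : ρ 1 = 1)
    (T : Module.End k Q) (hT : T ≠ 0) (hcomm : ∀ a, ρ a * T = T * ρ a)
    (N : Submodule k A) (n : ℕ) (hN : Module.finrank k (A ⧸ N) = n ^ 2)
    (hmax : ∀ M : Submodule k A, (∀ a, ∀ c ∈ M, a * c ∈ M) → (∀ a, ∀ c ∈ M, c * a ∈ M) → N ≤ M →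
      M = N ∨ M = ⊤)
    (hNT : ∀ a ∈ N, ρ a * T = 0) : n ≤ Module.finrank k (LinearMap.range T) := by
  have hst : ∀ a, ∀ q ∈ LinearMap.range T, ρ a q ∈ LinearMap.range T := by
    rintro a _ ⟨q, rfl⟩
    exact ⟨ρ a q, by rw [← Module.End.mul_apply, ← hcomm]; rfl⟩
  let σ : A →ₗ[k] Module.End k (LinearMap.range T) :=
    { toFun := fun a => (ρ a).restrict (hst a)
      map_add' := fun a b => by ext; simp
      map_smul' := fun c a => by ext; simp }
  have hσ : ∀ a, a ∈ LinearMap.ker σ ↔ ρ a * T = 0 := by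
    intro a
    rw [LinearMap.mem_ker]
    constructor
    · intro h
      ext q
      have := LinearMap.congr_fun h ⟨T q, q, rfl⟩
      exact congrArg Subtype.val this
    · intro h
      ext ⟨_, q, rfl⟩
      exact LinearMap.congr_fun h q
  have hker : LinearMap.ker σ = N := by
    refine (hmax (LinearMap.ker σ) ?_ ?_ fun a ha => (hσ a).2 (hNT a ha)).resolve_right ?_
    · intro a c hc
      rw [hσ] at hc ⊢
      rcases hρ with h | h
      · rw [h, mul_assoc, hc, mul_zero]
      · rw [h, mul_assoc, hcomm, ← mul_assoc, hc, zero_mul]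
    · intro a c hc
      rw [hσ] at hc ⊢
      rcases hρ with h | h
      · rw [h, mul_assoc, hcomm, ← mul_assoc, hc, zero_mul]
      · rw [h, mul_assoc, hc, mul_zero]
    · intro h
      have h1 := (hσ 1).1 (h ▸ Submodule.mem_top)
      rw [hρ1, one_mul] at h1
      exact hT h1
  have h1 : Module.finrank k (A ⧸ LinearMap.ker σ) ≤
      Module.finrank k (Module.End k (LinearMap.range T)) := by
    rw [σ.quotKerEquivRange.finrank_eq]
    exact Submodule.finrank_le _
  rw [hker, hN, Module.finrank_linearMap, ← sq] at h1
  exact (Nat.pow_le_pow_iff_left (by norm_num)).1 h1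

/-- The bimodule count: `Q` carries commuting left and right actions of `A/I`, and `e` lifts the
central idempotents of the blocks of `A/I`. -/
lemma count_rank {Q : Type*} [AddCommGroup Q] [Module k Q] [FiniteDimensional k Q]
    (L R : A →ₗ[k] Module.End k Q)
    (hL : ∀ a b, L (a * b) = L a * L b) (hR : ∀ a b, R (a * b) = R b * R a)
    (hL1 : L 1 = 1) (hR1 : R 1 = 1) (hLR : ∀ a b, L a * R b = R b * L a)
    (I : Submodule k A) (hLI : ∀ a ∈ I, L a = 0) (hRI : ∀ a ∈ I, R a = 0)
    {Γ : Type*} [Fintype Γ] [DecidableEq Γ] {t : ℕ} (e : Γ ⊕ Fin t → A)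
    (hcent : ∀ d a, e d * a - a * e d ∈ I) (hsum : ∑ d, e d - 1 ∈ I)
    (hidem : ∀ d, e d * e d - e d ∈ I) (horth : ∀ d d', d ≠ d' → e d * e d' ∈ I)
    (N : Fin t → Submodule k A) (n : Fin t → ℕ) (hN : ∀ i, Module.finrank k (A ⧸ N i) = n i ^ 2)
    (hmax : ∀ i, ∀ M : Submodule k A, (∀ a, ∀ c ∈ M, a * c ∈ M) → (∀ a, ∀ c ∈ M, c * a ∈ M) →
      N i ≤ M → M = N i ∨ M = ⊤)
    (hNe : ∀ i, ∀ a ∈ N i, a * e (.inr i) ∈ I)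
    (hLR0 : ∀ g h : Γ, L (e (.inl g)) * R (e (.inl h)) = 0)
    (hL0 : ∀ g : Γ, L (e (.inl g)) ≠ 0) (hR0 : ∀ g : Γ, R (e (.inl g)) ≠ 0)
    (m : ℕ) (hm : ∀ i, m ≤ n i) : 2 * m * Fintype.card Γ ≤ Module.finrank k Q := by
  have hLc : ∀ d a, L (e d) * L a = L a * L (e d) := fun d a => by
    rw [← hL, ← hL, ← sub_eq_zero, ← map_sub, hLI _ (hcent d a)]
  have hRc : ∀ d a, R (e d) * R a = R a * R (e d) := fun d a => by
    rw [← hR, ← hR, ← sub_eq_zero, ← map_sub, ← neg_sub, map_neg, hRI _ (hcent d a), neg_zero]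
  have hLs : ∑ d, L (e d) = 1 := by
    rw [← hL1, ← map_sum, ← sub_eq_zero, ← map_sub, hLI _ hsum]
  have hRs : ∑ d, R (e d) = 1 := by
    rw [← hR1, ← map_sum, ← sub_eq_zero, ← map_sub, hRI _ hsum]
  -- Some matrix block acts nontrivially from the right on the left component of `g`, because the
  -- one-dimensional blocks act by zero there.
  have hLrank : ∀ g, m ≤ Module.finrank k (LinearMap.range (L (e (.inl g)))) := by
    intro g
    obtain ⟨i, hi⟩ : ∃ i, L (e (.inl g)) * R (e (.inr i)) ≠ 0 := by
      by_contra! h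
      apply hL0 g
      rw [← mul_one (L _), ← hRs, Finset.mul_sum, Fintype.sum_sum_type]
      simp [hLR0, h]
    have h1 := le_finrank_range R (Or.inr hR) hR1 (L (e (.inl g)) * R (e (.inr i))) hi
      (fun a => by rw [← mul_assoc, ← hLR, mul_assoc, mul_assoc, hRc]) (N i) (n i) (hN i) (hmax i)
      (fun a ha => by
        rw [← mul_assoc, ← hLR, mul_assoc, ← hRc, ← hR, hRI _ (hNe i a ha), mul_zero])
    exact (hm i).trans (h1.trans
      (Submodule.finrank_mono (LinearMap.range_comp_le_range _ _)))
  have hRrank : ∀ g, m ≤ Module.finrank k (LinearMap.range (R (e (.inl g)))) := by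
    intro g
    obtain ⟨i, hi⟩ : ∃ i, R (e (.inl g)) * L (e (.inr i)) ≠ 0 := by
      by_contra! h
      apply hR0 g
      rw [← mul_one (R _), ← hLs, Finset.mul_sum, Fintype.sum_sum_type]
      simp [← hLR, hLR0]
      simp [hLR, h]
    have h1 := le_finrank_range L (Or.inl hL) hL1 (R (e (.inl g)) * L (e (.inr i))) hi
      (fun a => by rw [← mul_assoc, hLR, mul_assoc, mul_assoc, hLc]) (N i) (n i) (hN i) (hmax i)
      (fun a ha => by
        rw [← mul_assoc, hLR, mul_assoc, ← hL, hLI _ (hNe i a ha), mul_zero])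
    exact (hm i).trans (h1.trans
      (Submodule.finrank_mono (LinearMap.range_comp_le_range _ _)))
  let E : Γ ⊕ Γ → Module.End k Q := Sum.elim (fun g => L (e (.inl g))) (fun g => R (e (.inl g)))
  have hE := finrank_orthogonal E
    (by
      rintro (g | g)
      · change L _ * L _ = L _
        rw [← hL, ← sub_eq_zero, ← map_sub, hLI _ (hidem _)]
      · change R _ * R _ = R _
        rw [← hR, ← sub_eq_zero, ← map_sub, hRI _ (hidem _)])
    (by
      rintro (g | g) (h | h) hgh
      · change L _ * L _ = 0
        rw [← hL, hLI _ (horth _ _ fun h' => hgh (by simpa using h'))]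
      · exact hLR0 g h
      · change R _ * L _ = 0
        rw [← hLR]; exact hLR0 h g
      · change R _ * R _ = 0
        rw [← hR, hRI _ (horth _ _ fun h' => hgh (by simpa using h'.symm))])
  rw [Fintype.sum_sum_type] at hE
  have h1 : Fintype.card Γ * m ≤ ∑ g, Module.finrank k (LinearMap.range (E (.inl g))) := by
    rw [← smul_eq_mul, ← Finset.card_univ]
    exact Finset.card_nsmul_le_sum _ _ _ fun g _ => hLrank g
  have h2 : Fintype.card Γ * m ≤ ∑ g, Module.finrank k (LinearMap.range (E (.inr g))) := by
    rw [← smul_eq_mul, ← Finset.card_univ]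
    exact Finset.card_nsmul_le_sum _ _ _ fun g _ => hRrank g
  calc 2 * m * Fintype.card Γ = Fintype.card Γ * m + Fintype.card Γ * m := by ring
    _ ≤ _ := (add_le_add h1 h2).trans hE

/-- If left multiplication by `e` sends `I` into `I²`, a fixed vector in `I` lies in all powers of
`I`. -/
lemma mem_pow_of_left {I : Submodule k A} {e x : A} (hx : x ∈ I) (hex : e * x = x)
    (h : ∀ d ∈ I, e * d ∈ I * I) (r : ℕ) : x ∈ I ^ (r + 1) := by
  induction r with
  | zero => simpa using hx
  | succ r ih =>
    have h1 : ∀ y ∈ I ^ (r + 1), e * y ∈ I ^ (r + 2) := by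
      intro y hy
      rw [pow_succ'] at hy
      rw [pow_add, ((Commute.refl I).pow_pow r 2).eq, sq]
      refine Submodule.mul_induction_on hy (fun d hd _ hc => ?_) fun u v hu hv => ?_
      · rw [← mul_assoc]; exact Submodule.mul_mem_mul (h d hd) hc
      · rw [mul_add]; exact add_mem hu hv
    rw [← hex]; exact h1 x ih

lemma mem_pow_of_right {I : Submodule k A} {e x : A} (hx : x ∈ I) (hex : x * e = x)
    (h : ∀ d ∈ I, d * e ∈ I * I) (r : ℕ) : x ∈ I ^ (r + 1) := by
  induction r with
  | zero => simpa using hx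
  | succ r ih =>
    have h1 : ∀ y ∈ I ^ (r + 1), y * e ∈ I ^ (r + 2) := by
      intro y hy
      rw [pow_succ] at hy
      rw [pow_add, sq]
      refine Submodule.mul_induction_on hy (fun d hd c hc => ?_) fun u v hu hv => ?_
      · rw [mul_assoc]; exact Submodule.mul_mem_mul hd (h c hc)
      · rw [add_mul]; exact add_mem hu hv
    rw [← hex]; exact h1 x ih

section Bimodule
variable (I : Submodule k A)

/-- The `A`-bimodule `I/I²`. -/
abbrev Cot : Type _ := I ⧸ (I * I).submoduleOf I

/-- The operator on `I/I²` induced by a linear map preserving `I` and `I²`. -/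
noncomputable def cotMap (f : A →ₗ[k] A) (hf : ∀ c ∈ I, f c ∈ I) (hf2 : ∀ c ∈ I * I, f c ∈ I * I) :
    Module.End k (Cot I) :=
  Submodule.mapQ _ _ (f.restrict hf) fun c hc => hf2 _ hc

variable {I}

lemma cot_mk_eq_zero {c : I} : (Submodule.Quotient.mk c : Cot I) = 0 ↔ (c : A) ∈ I * I :=
  Submodule.Quotient.mk_eq_zero _

lemma cot_ext {S T : Module.End k (Cot I)}
    (h : ∀ c : I, S (Submodule.Quotient.mk c) = T (Submodule.Quotient.mk c)) : S = T := by
  ext c; exact h c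

lemma hl_sq (hl : ∀ a, ∀ c ∈ I, a * c ∈ I) (a : A) : ∀ c ∈ I * I, a * c ∈ I * I := by
  intro c hc
  refine Submodule.mul_induction_on hc (fun d hd c hc => ?_) fun u v hu hv => ?_
  · rw [← mul_assoc]; exact Submodule.mul_mem_mul (hl a d hd) hc
  · rw [mul_add]; exact add_mem hu hv

lemma hr_sq (hr : ∀ a, ∀ c ∈ I, c * a ∈ I) (a : A) : ∀ c ∈ I * I, c * a ∈ I * I := by
  intro c hc
  refine Submodule.mul_induction_on hc (fun d hd c hc => ?_) fun u v hu hv => ?_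
  · rw [mul_assoc]; exact Submodule.mul_mem_mul hd (hr a c hc)
  · rw [add_mul]; exact add_mem hu hv

variable (hl : ∀ a, ∀ c ∈ I, a * c ∈ I) (hr : ∀ a, ∀ c ∈ I, c * a ∈ I)

/-- The left action of `A` on `I/I²`. -/
noncomputable def cotL : A →ₗ[k] Module.End k (Cot I) where
  toFun a := cotMap I (LinearMap.mulLeft k a) (hl a) (hl_sq hl a)
  map_add' a b := cot_ext fun c => congrArg Submodule.Quotient.mk (Subtype.ext (add_mul a b c))
  map_smul' s a := cot_ext fun c => congrArg Submodule.Quotient.mk (Subtype.ext (smul_mul_assoc s a (c : A)))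

/-- The right action of `A` on `I/I²`. -/
noncomputable def cotR : A →ₗ[k] Module.End k (Cot I) where
  toFun a := cotMap I (LinearMap.mulRight k a) (hr a) (hr_sq hr a)
  map_add' a b := cot_ext fun c => congrArg Submodule.Quotient.mk (Subtype.ext (mul_add (c : A) a b))
  map_smul' s a := cot_ext fun c => congrArg Submodule.Quotient.mk (Subtype.ext (mul_smul_comm s (c : A) a))

lemma cotL_mk (a : A) (c : I) : cotL hl a (Submodule.Quotient.mk c) =
    Submodule.Quotient.mk ⟨a * c, hl a c c.2⟩ := rfl

lemma cotR_mk (a : A) (c : I) : cotR hr a (Submodule.Quotient.mk c) =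
    Submodule.Quotient.mk ⟨c * a, hr a c c.2⟩ := rfl

end Bimodule

/-- The dimension count for a finite-dimensional algebra `A` with nilpotent ideal `I`: `Γ` indexes
the one-dimensional blocks of `A/I`, and `N i` is the kernel of the `i`-th matrix block. By `hext`
there are no extensions between one-dimensional blocks; `hleft` and `hright` provide eigenvectors
in `I` for each one-dimensional block, acting on the left or on the right. The eigenvector of
`hleft` lies in `I²`, which makes the inequality strict. -/
theorem count [FiniteDimensional k A] (I : Submodule k A)
    (hl : ∀ a, ∀ c ∈ I, a * c ∈ I) (hr : ∀ a, ∀ c ∈ I, c * a ∈ I) {r : ℕ} (hnil : I ^ r = ⊥)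
    {Γ : Type*} [Fintype Γ] [DecidableEq Γ] [Nonempty Γ] {t : ℕ} (e : Γ ⊕ Fin t → A)
    (hcent : ∀ d a, e d * a - a * e d ∈ I) (hsum : ∑ d, e d - 1 ∈ I)
    (hidem : ∀ d, e d * e d - e d ∈ I) (horth : ∀ d d', d ≠ d' → e d * e d' ∈ I)
    (N : Fin t → Submodule k A) (n : Fin t → ℕ) (hN : ∀ i, Module.finrank k (A ⧸ N i) = n i ^ 2)
    (hmax : ∀ i, ∀ M : Submodule k A, (∀ a, ∀ c ∈ M, a * c ∈ M) → (∀ a, ∀ c ∈ M, c * a ∈ M) →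
      N i ≤ M → M = N i ∨ M = ⊤)
    (hNe : ∀ i, ∀ a ∈ N i, a * e (.inr i) ∈ I)
    (hext : ∀ g h : Γ, ∀ d ∈ I, e (.inl g) * d * e (.inl h) ∈ I * I)
    (hleft : ∀ g : Γ, ∃ x ∈ I, x ≠ 0 ∧ e (.inl g) * x = x ∧ ∃ h : Γ, x * e (.inl h) = x)
    (hright : ∀ h : Γ, ∃ x ∈ I, x ≠ 0 ∧ x * e (.inl h) = x)
    (m : ℕ) (hm : ∀ i, m ≤ n i) :
    Module.finrank k (A ⧸ I) + 2 * m * Fintype.card Γ < Module.finrank k A := by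
  have hpow : ∀ x, x ≠ 0 → ¬ ∀ s, x ∈ I ^ (s + 1) := by
    intro x hx h
    have h1 := h r
    rw [pow_succ, hnil, Submodule.bot_mul] at h1
    exact hx ((Submodule.mem_bot k).1 h1)
  have hQ := count_rank (cotL hl) (cotR hr)
    (fun a b => cot_ext fun c => by
      rw [Module.End.mul_apply, cotL_mk, cotL_mk, cotL_mk]
      congr 1; ext; simp [mul_assoc])
    (fun a b => cot_ext fun c => by
      rw [Module.End.mul_apply, cotR_mk, cotR_mk, cotR_mk]
      congr 1; ext; simp [mul_assoc])
    (cot_ext fun c => by rw [cotL_mk]; simp)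
    (cot_ext fun c => by rw [cotR_mk]; simp)
    (fun a b => cot_ext fun c => by
      rw [Module.End.mul_apply, Module.End.mul_apply, cotL_mk, cotR_mk, cotR_mk, cotL_mk]
      congr 1; ext; simp [mul_assoc])
    I
    (fun a ha => cot_ext fun c => by
      rw [cotL_mk, LinearMap.zero_apply, cot_mk_eq_zero]
      exact Submodule.mul_mem_mul ha c.2)
    (fun a ha => cot_ext fun c => by
      rw [cotR_mk, LinearMap.zero_apply, cot_mk_eq_zero]
      exact Submodule.mul_mem_mul c.2 ha)
    e hcent hsum hidem horth N n hN hmax hNe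
    (fun g h => cot_ext fun c => by
      rw [Module.End.mul_apply, cotR_mk, cotL_mk, LinearMap.zero_apply, cot_mk_eq_zero]
      simpa [mul_assoc] using hext g h c c.2)
    (fun g h0 => by
      obtain ⟨x, hxI, hx0, hgx, -⟩ := hleft g
      refine hpow x hx0 (mem_pow_of_left hxI hgx fun d hd => ?_)
      have := LinearMap.congr_fun h0 (Submodule.Quotient.mk ⟨d, hd⟩)
      rwa [cotL_mk, LinearMap.zero_apply, cot_mk_eq_zero] at this)
    (fun h h0 => by
      obtain ⟨x, hxI, hx0, hxh⟩ := hright h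
      refine hpow x hx0 (mem_pow_of_right hxI hxh fun d hd => ?_)
      have := LinearMap.congr_fun h0 (Submodule.Quotient.mk ⟨d, hd⟩)
      rwa [cotR_mk, LinearMap.zero_apply, cot_mk_eq_zero] at this)
    m hm
  have h1 : Module.finrank k (A ⧸ I) + Module.finrank k I = Module.finrank k A :=
    Submodule.finrank_quotient_add_finrank I
  have h2 : Module.finrank k (Cot I) + Module.finrank k ((I * I).submoduleOf I) =
      Module.finrank k I := Submodule.finrank_quotient_add_finrank _
  have h3 : 0 < Module.finrank k ((I * I).submoduleOf I) := by
    obtain ⟨x, hxI, hx0, hgx, h, hxh⟩ := hleft (Classical.arbitrary Γ)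
    have h4 := hext (Classical.arbitrary Γ) h x hxI
    rw [hgx, hxh] at h4
    refine Submodule.one_le_finrank_iff.2 fun h5 => hx0 ?_
    have h6 : (⟨x, hxI⟩ : I) ∈ (I * I).submoduleOf I := h4
    rw [h5, Submodule.mem_bot] at h6
    exact congrArg Subtype.val h6
  omega

end Counting
end BD

/-! ### Subcoalgebras and ideals of the dual algebra -/

namespace BD
open Coalgebra HopfAlgebra WithConv

section Duality
variable {k H : Type*} [Field k] [AddCommGroup H] [Module k H]

/-- The functionals vanishing on `D`. -/
def ann (D : Submodule k H) : Submodule k (Conv k H) where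
  carrier := {a | ∀ x ∈ D, a x = 0}
  add_mem' ha hb x hx := by simp [ha x hx, hb x hx]
  zero_mem' x _ := by simp
  smul_mem' c a ha x hx := by simp [ha x hx]

/-- The common zeros of the functionals in `N`. -/
def coann (N : Submodule k (Conv k H)) : Submodule k H where
  carrier := {x | ∀ a ∈ N, a x = 0}
  add_mem' hx hy a ha := by simp [hx a ha, hy a ha]
  zero_mem' a _ := by simp
  smul_mem' c x hx a ha := by simp [hx a ha]

lemma mem_ann {D : Submodule k H} {a : Conv k H} : a ∈ ann D ↔ ∀ x ∈ D, a x = 0 := Iff.rfl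

lemma mem_coann {N : Submodule k (Conv k H)} {x : H} : x ∈ coann N ↔ ∀ a ∈ N, a x = 0 := Iff.rfl

lemma coann_ann (D : Submodule k H) : coann (ann D) = D := by
  refine le_antisymm (fun x hx => ?_) fun x hx a ha => ha x hx
  by_contra hxD
  obtain ⟨f, hf, hD⟩ := Submodule.exists_le_ker_of_notMem hxD
  exact hf (hx (toConv f) fun y hy => hD hy)

lemma ann_coann [FiniteDimensional k H] (N : Submodule k (Conv k H)) : ann (coann N) = N := by
  refine le_antisymm (fun a ha => ?_) fun a ha x hx => hx a ha
  by_contra haN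
  obtain ⟨φ, hφ, hN⟩ := Submodule.exists_le_ker_of_notMem (K := k) (V := Conv k H) haN
  obtain ⟨x, hx⟩ := exists_rep φ
  rw [hx] at hφ
  exact hφ (ha x fun b hb => by rw [← hx]; exact hN hb)

lemma ann_anti {D E : Submodule k H} (h : D ≤ E) : ann E ≤ ann D := fun _ ha x hx => ha x (h hx)

lemma coann_anti {D E : Submodule k (Conv k H)} (h : D ≤ E) : coann E ≤ coann D :=
  fun _ ha x hx => ha x (h hx)

lemma finrank_quot_ann [FiniteDimensional k H] (D : Submodule k H) :
    Module.finrank k (Conv k H ⧸ ann D) = Module.finrank k D := by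
  let ρ : Conv k H →ₗ[k] Module.Dual k D :=
    { toFun := fun a => a.ofConv ∘ₗ D.subtype
      map_add' := fun a b => rfl
      map_smul' := fun c a => rfl }
  have hker : LinearMap.ker ρ = ann D := by
    ext a
    rw [LinearMap.mem_ker, mem_ann]
    constructor
    · intro h x hx
      exact LinearMap.congr_fun h ⟨x, hx⟩
    · intro h
      ext ⟨x, hx⟩
      exact h x hx
  have hsurj : Function.Surjective ρ := by
    intro f
    obtain ⟨g, hg⟩ := LinearMap.exists_extend f
    exact ⟨toConv g, hg⟩
  rw [← hker, (LinearMap.quotKerEquivOfSurjective ρ hsurj).finrank_eq]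
  exact Subspace.dual_finrank_eq

variable [Coalgebra k H]

lemma mul_apply_eq_zero {D : Submodule k H} (hD : IsSubcoalgebra k D) {a : Conv k H}
    (ha : a ∈ ann D) (b : Conv k H) {x : H} (hx : x ∈ D) : (a * b) x = 0 ∧ (b * a) x = 0 := by
  obtain ⟨s, hs⟩ := hD x hx
  have h : ∀ s : D ⊗[k] D, pair a b (TensorProduct.map D.subtype D.subtype s) = 0 ∧
      pair b a (TensorProduct.map D.subtype D.subtype s) = 0 := by
    intro s
    induction s with
    | zero => simp
    | add s s' hs hs' => simp [hs, hs']
    | tmul u v => simp [ha u u.2, ha v v.2]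
  rw [mul_apply_eq_pair, mul_apply_eq_pair, ← hs]
  exact h s

/-- The functionals vanishing on a subcoalgebra form a two-sided ideal. -/
lemma mul_mem_ann {D : Submodule k H} (hD : IsSubcoalgebra k D) {a : Conv k H}
    (ha : a ∈ ann D) (b : Conv k H) : b * a ∈ ann D :=
  fun _ hx => (mul_apply_eq_zero hD ha b hx).2

lemma mul_mem_ann' {D : Submodule k H} (hD : IsSubcoalgebra k D) {a : Conv k H}
    (ha : a ∈ ann D) (b : Conv k H) : a * b ∈ ann D :=
  fun _ hx => (mul_apply_eq_zero hD ha b hx).1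

/-- The common zeros of a two-sided ideal form a subcoalgebra. -/
lemma isSubcoalgebra_coann [FiniteDimensional k H] {N : Submodule k (Conv k H)}
    (hl : ∀ a, ∀ c ∈ N, a * c ∈ N) (hr : ∀ a, ∀ c ∈ N, c * a ∈ N) :
    IsSubcoalgebra k (coann N) := by
  intro x hx
  obtain ⟨p, hp⟩ := LinearMap.exists_leftInverse_of_injective (coann N).subtype
    (coann N).ker_subtype
  let P : H →ₗ[k] H := (coann N).subtype ∘ₗ p
  have hP : ∀ y ∈ coann N, P y = y := fun y hy =>
    congrArg Subtype.val (LinearMap.congr_fun hp ⟨y, hy⟩)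
  have hmem : ∀ a : Conv k H, a - toConv (a.ofConv ∘ₗ P) ∈ N := by
    intro a
    rw [← ann_coann N]
    intro y hy
    simp [hP y hy]
  have key : comul (R := k) x = TensorProduct.map P P (comul x) := by
    apply eq_of_forall_pair
    intro a b
    have h1 : pair a b (TensorProduct.map P P (comul x)) =
        (toConv (a.ofConv ∘ₗ P) * toConv (b.ofConv ∘ₗ P)) x := by
      rw [mul_apply_eq_pair]
      generalize comul (R := k) x = s
      induction s with
      | zero => simp
      | add s s' hs hs' => simp only [map_add, hs, hs']
      | tmul u v => simp
    rw [h1, ← mul_apply_eq_pair]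
    have h2 : a * b - toConv (a.ofConv ∘ₗ P) * toConv (b.ofConv ∘ₗ P) ∈ N := by
      have : a * b - toConv (a.ofConv ∘ₗ P) * toConv (b.ofConv ∘ₗ P) =
          (a - toConv (a.ofConv ∘ₗ P)) * b +
            toConv (a.ofConv ∘ₗ P) * (b - toConv (b.ofConv ∘ₗ P)) := by
        rw [sub_mul, mul_sub]; abel
      rw [this]
      exact add_mem (hr _ _ (hmem a)) (hl _ _ (hmem b))
    have h3 := hx _ h2
    simpa [sub_eq_zero] using h3
  refine ⟨TensorProduct.map p p (comul x), ?_⟩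
  rw [← LinearMap.comp_apply, ← TensorProduct.map_comp]
  exact key.symm

/-- Maximal two-sided ideals of the dual correspond to simple subcoalgebras. -/
lemma isSimple_coann [FiniteDimensional k H] {N : Submodule k (Conv k H)}
    (hl : ∀ a, ∀ c ∈ N, a * c ∈ N) (hr : ∀ a, ∀ c ∈ N, c * a ∈ N) (hN : N ≠ ⊤)
    (hmax : ∀ M : Submodule k (Conv k H), (∀ a, ∀ c ∈ M, a * c ∈ M) → (∀ a, ∀ c ∈ M, c * a ∈ M) →
      N ≤ M → M = N ∨ M = ⊤) : IsSimpleSubcoalgebra k (coann N) := by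
  have htop : ∀ D : Submodule k H, ann D = ⊤ → D = ⊥ := by
    intro D hD
    rw [← coann_ann D, hD, eq_bot_iff]
    intro x hx
    rw [Submodule.mem_bot]
    exact eq_of_forall_apply (k := k) fun a => by rw [hx a trivial, map_zero]
  refine ⟨isSubcoalgebra_coann hl hr, fun h => hN ?_, fun C' hC' hsub => ?_⟩
  · rw [← ann_coann N, h, eq_top_iff]
    intro a _ x hx
    rw [(Submodule.mem_bot k).1 hx, map_zero]
  · rcases hmax (ann C') (fun a c hc => mul_mem_ann hsub hc a)
      (fun a c hc => mul_mem_ann' hsub hc a)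
      (by rw [← ann_coann N]; exact ann_anti hC') with h | h
    · right; rw [← coann_ann C', h]
    · left; exact htop C' h

/-- Simple subcoalgebras correspond to maximal two-sided ideals of the dual. -/
lemma maximal_ann [FiniteDimensional k H] {C : Submodule k H} (hC : IsSimpleSubcoalgebra k C)
    (M : Submodule k (Conv k H)) (hl : ∀ a, ∀ c ∈ M, a * c ∈ M) (hr : ∀ a, ∀ c ∈ M, c * a ∈ M)
    (hCM : ann C ≤ M) : M = ann C ∨ M = ⊤ := by
  rcases hC.2.2 (coann M) (by rw [← coann_ann C]; exact coann_anti hCM)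
    (isSubcoalgebra_coann hl hr) with h | h
  · right
    rw [← ann_coann M, h, eq_top_iff]
    intro a _ x hx
    rw [(Submodule.mem_bot k).1 hx, map_zero]
  · left; rw [← h, ann_coann]

end Duality

section Radical
variable {k A : Type*} [Field k] [Ring A] [Algebra k A]

/-- The kernel of a surjection onto a simple ring is a maximal two-sided ideal. -/
lemma ker_maximal {S : Type*} [Ring S] [IsSimpleRing S] [Algebra k S] (φ : A →ₐ[k] S)
    (hφ : Function.Surjective φ) (M : Submodule k A) (hl : ∀ a, ∀ c ∈ M, a * c ∈ M)
    (hr : ∀ a, ∀ c ∈ M, c * a ∈ M) (hM : LinearMap.ker φ.toLinearMap ≤ M) :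
    M = LinearMap.ker φ.toLinearMap ∨ M = ⊤ := by
  let T : TwoSidedIdeal S := TwoSidedIdeal.mk' (M.map φ.toLinearMap : Set S) (zero_mem _)
    (fun h h' => add_mem h h') (fun h => neg_mem h)
    (by
      rintro x _ ⟨y, hy, rfl⟩
      obtain ⟨a, rfl⟩ := hφ x
      exact ⟨a * y, hl a y hy, map_mul φ a y⟩)
    (by
      rintro _ x ⟨y, hy, rfl⟩
      obtain ⟨a, rfl⟩ := hφ x
      exact ⟨y * a, hr a y hy, map_mul φ y a⟩)
  have hT : ∀ s, s ∈ T ↔ s ∈ M.map φ.toLinearMap := fun s => TwoSidedIdeal.mem_mk' _ _ _ _ _ _ _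
  have hmem : ∀ a, a ∈ M ↔ φ a ∈ T := by
    intro a
    rw [hT]
    constructor
    · exact fun ha => ⟨a, ha, rfl⟩
    · rintro ⟨b, hb, hab⟩
      have h1 : a - b ∈ M := hM (by
        rw [LinearMap.mem_ker, map_sub, hab]; exact sub_self _)
      simpa using add_mem h1 hb
  rcases eq_bot_or_eq_top T with h | h
  · left
    ext a
    rw [hmem, h]
    exact TwoSidedIdeal.mem_bot S
  · right
    rw [eq_top_iff]
    intro a _
    rw [hmem, h]
    trivial

/-- In a finite-dimensional algebra over an algebraically closed field, an ideal contained in all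
maximal two-sided ideals is nilpotent. -/
lemma nilpotent_of_le_maximal [IsAlgClosed k] [FiniteDimensional k A] (I : Submodule k A)
    (hI : ∀ P : Submodule k A, (∀ a, ∀ c ∈ P, a * c ∈ P) → (∀ a, ∀ c ∈ P, c * a ∈ P) → P ≠ ⊤ →
      (∀ M : Submodule k A, (∀ a, ∀ c ∈ M, a * c ∈ M) → (∀ a, ∀ c ∈ M, c * a ∈ M) → P ≤ M →
        M = P ∨ M = ⊤) → I ≤ P) : ∃ r : ℕ, I ^ r = ⊥ := by
  have : IsArtinianRing A := IsArtinianRing.of_finite k A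
  have hsp : IsSemiprimaryRing A := inferInstance
  have hss : IsSemisimpleRing (A ⧸ Ring.jacobson A) := hsp.isSemisimpleRing
  obtain ⟨N, d, hd, ⟨E⟩⟩ :=
    IsSemisimpleRing.exists_algEquiv_pi_matrix_of_isAlgClosed k (A ⧸ Ring.jacobson A)
  let φ : (j : Fin N) → A →ₐ[k] Matrix (Fin (d j)) (Fin (d j)) k := fun j =>
    ((Pi.evalAlgHom k _ j).comp E.toAlgHom).comp (Ideal.Quotient.mkₐ k (Ring.jacobson A))
  have hφ : ∀ j, Function.Surjective (φ j) := fun j =>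
    ((Function.surjective_eval j).comp E.surjective).comp (Ideal.Quotient.mkₐ_surjective k _)
  have hIφ : ∀ j, ∀ c ∈ I, φ j c = 0 := by
    intro j
    have h1 := hI (LinearMap.ker (φ j).toLinearMap)
      (fun a c hc => by
        have hc' : φ j c = 0 := hc
        change φ j (a * c) = 0
        rw [map_mul, hc', mul_zero])
      (fun a c hc => by
        have hc' : φ j c = 0 := hc
        change φ j (c * a) = 0
        rw [map_mul, hc', zero_mul])
      (fun h => by
        have h2 : (1 : A) ∈ LinearMap.ker (φ j).toLinearMap := h ▸ Submodule.mem_top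
        have h3 : φ j 1 = 0 := h2
        rw [map_one] at h3
        exact one_ne_zero h3)
      (fun M hl hr hM => ker_maximal (φ j) (hφ j) M hl hr hM)
    exact fun c hc => h1 hc
  have hIJ : ∀ c ∈ I, c ∈ Ring.jacobson A := by
    intro c hc
    rw [← Ideal.Quotient.eq_zero_iff_mem]
    apply E.injective
    rw [map_zero]
    funext j
    exact hIφ j c hc
  obtain ⟨r, hr⟩ := hsp.isNilpotent
  refine ⟨r, ?_⟩
  have hpow : ∀ s : ℕ, ∀ c ∈ I ^ s, c ∈ Ring.jacobson A ^ s := by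
    intro s
    induction s with
    | zero =>
      intro c _
      have h1 : Ring.jacobson A ^ 0 = ⊤ := (Submodule.pow_zero _).trans Ideal.one_eq_top
      rw [h1]; trivial
    | succ s ih =>
      intro c hc
      have h1 : Ring.jacobson A ^ (s + 1) = Ring.jacobson A ^ s * Ring.jacobson A :=
        Submodule.pow_succ _
      rw [pow_succ] at hc
      rw [h1]
      refine Submodule.mul_induction_on hc (fun u hu v hv => ?_) fun u v hu hv => add_mem hu hv
      exact Ideal.mul_mem_mul (ih u hu) (hIJ v hv)
  rw [eq_bot_iff]
  intro c hc
  have := hpow r c hc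
  rwa [hr] at this

end Radical
end BD

/-! ### The blocks of the coradical -/

namespace BD
open Coalgebra HopfAlgebra WithConv

section Blocks
variable {k H : Type*} [Field k] [AddCommGroup H] [Module k H]

lemma mem_ann_iSup {X : Type*} {D : X → Submodule k H} {a : Conv k H}
    (h : ∀ x, a ∈ ann (D x)) : a ∈ ann (⨆ x, D x) := by
  have h1 : ⨆ x, D x ≤ LinearMap.ker a.ofConv := iSup_le fun x y hy => h x y hy
  exact fun y hy => h1 hy

/-- If the sum of the `D x` is direct (expressed by a dimension inequality), a functional `u` can be
cut off to each summand: `e x` agrees with `u` on `D x` and vanishes on the other summands. -/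
lemma exists_cutoff [FiniteDimensional k H] {X : Type*} [Fintype X] [DecidableEq X]
    (D : X → Submodule k H)
    (hD : ∑ x, Module.finrank k (D x) ≤ Module.finrank k (⨆ x, D x : Submodule k H))
    (u : Conv k H) : ∃ e : X → Conv k H, (∀ x, e x - u ∈ ann (D x)) ∧
      ∀ x x', x ≠ x' → e x ∈ ann (D x') := by
  let Φ : ((x : X) → D x) →ₗ[k] H := ∑ x, (D x).subtype ∘ₗ LinearMap.proj x
  have hΦ : ∀ v, Φ v = ∑ x, (v x : H) := fun v => by simp [Φ]
  have hsingle : ∀ x (y : D x), Φ (Pi.single x y) = y := by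
    intro x y
    rw [hΦ, Finset.sum_eq_single x]
    · simp
    · intro x' _ hx'
      rw [Pi.single_eq_of_ne hx']; rfl
    · simp
  have hrange : ⨆ x, D x ≤ LinearMap.range Φ :=
    iSup_le fun x y hy => ⟨Pi.single x ⟨y, hy⟩, hsingle x ⟨y, hy⟩⟩
  have hker : LinearMap.ker Φ = ⊥ := by
    have h1 := LinearMap.finrank_range_add_finrank_ker Φ
    rw [Module.finrank_pi_fintype] at h1
    have h2 := Submodule.finrank_mono hrange
    have h3 : Module.finrank k (LinearMap.ker Φ) = 0 := by omega
    exact Submodule.finrank_eq_zero.1 h3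
  obtain ⟨Ψ, hΨ⟩ := LinearMap.exists_leftInverse_of_injective Φ hker
  have hΨ' : ∀ x (y : D x), Ψ y = Pi.single x y := fun x y => by
    have := LinearMap.congr_fun hΨ (Pi.single x y)
    rwa [LinearMap.comp_apply, hsingle] at this
  refine ⟨fun x => toConv (u.ofConv ∘ₗ (D x).subtype ∘ₗ LinearMap.proj x ∘ₗ Ψ), ?_, ?_⟩
  · intro x y hy
    have := hΨ' x ⟨y, hy⟩
    simp only at this
    simp [this]
  · intro x x' hne y hy
    have := hΨ' x' ⟨y, hy⟩
    simp only at this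
    simp [this, Pi.single_eq_of_ne hne]

lemma mem_ann_span {g : H} {a : Conv k H} (h : a g = 0) : a ∈ ann (k ∙ g) := by
  intro x hx
  obtain ⟨c, rfl⟩ := Submodule.mem_span_singleton.1 hx
  rw [map_smul, h, smul_zero]

variable [Coalgebra k H]

/-- Without nontrivial skew-primitives there are no extensions between one-dimensional blocks:
a functional on `e_g I e_h / I²` would give a skew-primitive element. -/
lemma mul_mul_mem_sq [FiniteDimensional k H] {g h : H} (hh : comul (R := k) h = h ⊗ₜ[k] h)
    {I : Submodule k (Conv k H)}
    (hgI : ∀ a ∈ I, a g = 0) (hhI : ∀ a ∈ I, a h = 0) {e f : Conv k H}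
    (he : ∀ a, e * a - a g • e ∈ I) (hf : ∀ a, a * f - a h • f ∈ I)
    (hskew : ∀ x : H, comul (R := k) x = x ⊗ₜ[k] h + g ⊗ₜ[k] x → ∃ c : k, x = c • (h - g))
    {d : Conv k H} (hd : d ∈ I) : e * d * f ∈ I * I := by
  by_contra hcon
  obtain ⟨θ, hθ, hθI⟩ := Submodule.exists_le_ker_of_notMem (K := k) (V := Conv k H) hcon
  let ψ : Conv k H →ₗ[k] k := θ ∘ₗ LinearMap.mulRight k f ∘ₗ LinearMap.mulLeft k e -
    θ (e * f) • ev k H h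
  have hψ : ∀ a, ψ a = θ (e * a * f) - θ (e * f) * a h := fun a => rfl
  obtain ⟨y, hy⟩ := exists_rep ψ
  have key : ∀ a b : Conv k H, ψ (a * b) = a g * ψ b + ψ a * b h := by
    intro a b
    have h1 : θ ((e * a - a g • e) * (b * f - b h • f)) = 0 :=
      hθI (Submodule.mul_mem_mul (he a) (hf b))
    have h2 : (e * a - a g • e) * (b * f - b h • f) =
        e * (a * b) * f - b h • (e * a * f) - a g • (e * b * f) + (b h * a g) • (e * f) := by
      simp only [sub_mul, mul_sub, smul_mul_assoc, mul_smul_comm, smul_sub, smul_smul, mul_assoc]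
      abel
    rw [h2] at h1
    simp only [map_add, map_sub, map_smul, smul_eq_mul] at h1
    rw [hψ, hψ, hψ, mul_apply_of_grouplike a b hh]
    linear_combination h1
  obtain ⟨c, hc⟩ := hskew y (eq_of_forall_pair fun a b => by
    rw [← mul_apply_eq_pair, ← hy, key, hy, hy, map_add, pair_tmul, pair_tmul, add_comm])
  have h1 := hψ d
  rw [hy, hc, map_smul, map_sub, hgI d hd, hhI d hd, sub_zero, smul_zero, mul_zero, sub_zero] at h1
  exact hθ h1.symm

lemma isSubcoalgebra_span {g : H} (hg : comul (R := k) g = g ⊗ₜ[k] g) :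
    IsSubcoalgebra k (k ∙ g) := by
  intro x hx
  obtain ⟨c, rfl⟩ := Submodule.mem_span_singleton.1 hx
  refine ⟨c • (⟨g, Submodule.mem_span_singleton_self g⟩ ⊗ₜ
    ⟨g, Submodule.mem_span_singleton_self g⟩), ?_⟩
  rw [map_smul, map_smul, hg]
  rfl

/-- The functionals vanishing on the coradical form a nilpotent ideal. -/
lemma ann_coradical_nilpotent [IsAlgClosed k] [FiniteDimensional k H] :
    ∃ r : ℕ, (ann (Coradical k H)) ^ r = ⊥ := by
  refine nilpotent_of_le_maximal _ fun P hl hr hP hmax => ?_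
  rw [← ann_coann P]
  exact ann_anti (le_sSup (isSimple_coann hl hr hP hmax))

end Blocks
end BD

open BD WithConv in
/-- Beattie–Dascalescu bound: Let `H` be a finite-dimensional
non-cosemisimple Hopf algebra with coradical `H₀ ≅ k[G] ⊕ M*(n₁,k) ⊕ ⋯ ⊕ M*(n_t,k)`,
`2 ≤ n₁ ≤ ⋯ ≤ n_t`, such that `H` has no non-trivial skew-primitive elements.  Then
`dim H > (1 + 2n₁)|G| + Σᵢ nᵢ²`. -/
theorem beattie_dascalescu_bound
    (k : Type*) [Field k] [IsAlgClosed k] [CharZero k]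
    (H : Type*) [Ring H] [HopfAlgebra k H] [FiniteDimensional k H]
    (G : Set H)
    (hG : G = {y : H | Coalgebra.comul (R := k) y = y ⊗ₜ[k] y ∧
      Coalgebra.counit (R := k) y = (1 : k)})
    (t : ℕ) (ht : 0 < t) (n : Fin t → ℕ) (hn2 : ∀ i, 2 ≤ n i) (hmono : Monotone n)
    (C : Fin t → Submodule k H) (hC : ∀ i, IsSimpleSubcoalgebra k (C i))
    (hCrank : ∀ i, Module.finrank k (C i) = (n i) ^ 2)
    (hcorad : Coradical k H = Submodule.span k G ⊔ ⨆ i, C i)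
    (hcoraddim : Module.finrank k (Coradical k H) = G.ncard + ∑ i, (n i) ^ 2)
    (hnotcosemi : Coradical k H ≠ ⊤)
    (hnoskew : ∀ x : H, ∀ g ∈ G, ∀ h ∈ G,
      Coalgebra.comul (R := k) x = x ⊗ₜ[k] h + g ⊗ₜ[k] x → ∃ c : k, x = c • (h - g)) :
    Module.finrank k H > (1 + 2 * n ⟨0, ht⟩) * G.ncard + ∑ i, (n i) ^ 2 := by
  classical
  have hGl : ∀ g : H, g ∈ G ↔ IsGroupLikeElem k g := fun g => by
    rw [hG]; exact ⟨fun h => ⟨h.2, h.1⟩, fun h => ⟨h.2, h.1⟩⟩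
  have hfin : G.Finite := by
    have h1 : {a : H | IsGroupLikeElem k a} = G := by ext g; exact (hGl g).symm
    have h2 := linearIndepOn_isGroupLikeElem (R := k) (A := H)
    rw [h1] at h2
    have h3 : LinearIndependent k (fun x : G => (x : H)) := h2
    have : Finite G := h3.finite
    exact Set.toFinite G
  have : Fintype G := hfin.fintype
  have hcard : G.ncard = Fintype.card G := by
    rw [← Nat.card_coe_set_eq, Nat.card_eq_fintype_card]
  have : Nonempty G := ⟨⟨1, (hGl 1).2 IsGroupLikeElem.one⟩⟩
  have hne : ∀ g : G, (g : H) ≠ 0 := fun g => ((hGl g).1 g.2).ne_zero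
  let D : G ⊕ Fin t → Submodule k H := Sum.elim (fun g => k ∙ (g : H)) C
  have hDsup : ⨆ x, D x = Coradical k H := by
    rw [hcorad, iSup_sum, Submodule.span_eq_iSup_of_singleton_spans, iSup_subtype']
    rfl
  have hDsub : ∀ x, IsSubcoalgebra k (D x) := by
    rintro (g | i)
    · exact isSubcoalgebra_span ((hGl g).1 g.2).comul_eq_tmul_self
    · exact (hC i).1
  -- The cut-offs of the counit lift the central idempotents of the blocks of `H*/I`.
  obtain ⟨e, he1, he0⟩ := exists_cutoff D (by
    rw [hDsup, hcoraddim, Fintype.sum_sum_type]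
    have h1 : ∀ g : G, Module.finrank k (D (.inl g)) = 1 := fun g => finrank_span_singleton (hne g)
    have h2 : ∀ i, Module.finrank k (D (.inr i)) = n i ^ 2 := hCrank
    simp only [h1, h2, Finset.sum_const, Finset.card_univ, smul_eq_mul, mul_one, hcard]
    exact le_rfl) (1 : Conv k H)
  let I : Submodule k (Conv k H) := ann (Coradical k H)
  have hmem : ∀ {a : Conv k H}, (∀ x, a ∈ ann (D x)) → a ∈ I := fun h => by
    have := mem_ann_iSup h
    rwa [hDsup] at this
  have hl : ∀ a, ∀ c ∈ I, a * c ∈ I := fun a c hc =>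
    hmem fun x => mul_mem_ann (hDsub x) (ann_anti (hDsup ▸ le_iSup D x) hc) a
  have hr : ∀ a, ∀ c ∈ I, c * a ∈ I := fun a c hc =>
    hmem fun x => mul_mem_ann' (hDsub x) (ann_anti (hDsup ▸ le_iSup D x) hc) a
  have hIG : ∀ g : G, ∀ a ∈ I, a (g : H) = 0 := fun g a ha =>
    ha g (hDsup ▸ le_iSup D (.inl g) (Submodule.mem_span_singleton_self _))
  have heg : ∀ g : G, e (.inl g) (g : H) = 1 := fun g => by
    have h1 := he1 (.inl g) g (Submodule.mem_span_singleton_self _)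
    have h2 : (1 : Conv k H) (g : H) = 1 := ((hGl g).1 g.2).counit_eq_one
    have h3 : e (.inl g) (g : H) - (1 : Conv k H) (g : H) = 0 := h1
    rw [h2] at h3
    exact sub_eq_zero.1 h3
  have hleftG : ∀ (g : G) a, e (.inl g) * a - a (g : H) • e (.inl g) ∈ I := by
    intro g a
    refine hmem fun x => ?_
    by_cases hx : .inl g = x
    · subst hx
      apply mem_ann_span
      change (e (.inl g) * a) (g : H) - a (g : H) * e (.inl g) (g : H) = 0
      rw [mul_apply_of_grouplike _ _ ((hGl g).1 g.2).comul_eq_tmul_self, heg]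
      ring
    · exact sub_mem (mul_mem_ann' (hDsub x) (he0 _ _ hx) _) (Submodule.smul_mem _ _ (he0 _ _ hx))
  have hrightG : ∀ (g : G) a, a * e (.inl g) - a (g : H) • e (.inl g) ∈ I := by
    intro g a
    refine hmem fun x => ?_
    by_cases hx : .inl g = x
    · subst hx
      apply mem_ann_span
      change (a * e (.inl g)) (g : H) - a (g : H) * e (.inl g) (g : H) = 0
      rw [mul_apply_of_grouplike _ _ ((hGl g).1 g.2).comul_eq_tmul_self, heg]
      ring
    · exact sub_mem (mul_mem_ann (hDsub x) (he0 _ _ hx) _) (Submodule.smul_mem _ _ (he0 _ _ hx))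
  obtain ⟨r, hnil⟩ : ∃ r : ℕ, I ^ r = ⊥ := ann_coradical_nilpotent
  obtain ⟨Λ, α, hΛ, hα, htr⟩ := exists_translate (k := k) (H := H)
  -- Otherwise Maschke would give `I = 0`, that is `H₀ = H`.
  have hΛ1 : Λ 1 = 0 := by
    by_contra h1
    have h2 := hΛ.maschke h1 I hl fun c hc => ⟨r, by
      have h3 := Submodule.pow_mem_pow I hc r
      rw [hnil] at h3
      exact (Submodule.mem_bot k).1 h3⟩
    apply hnotcosemi
    rw [← coann_ann (Coradical k H), eq_top_iff]
    intro x _ a ha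
    have h3 : a ∈ I := ha
    rw [h2, Submodule.mem_bot] at h3
    rw [h3]; rfl
  -- A translate `L` of the integral satisfies `e_g L = L`, so it vanishes on every block except
  -- possibly that of `g`, where its value is `L g = Λ 1 = 0`.
  have htr' : ∀ g : G, ∃ x ∈ I, x ≠ 0 ∧ e (.inl g) * x = x ∧
      ∀ h : G, (h : H) = g * α → x * e (.inl h) = x := by
    intro g
    obtain ⟨L, hL0, hLg, hLl, hLr⟩ := htr g ((hGl g).1 g.2)
    have h1 : e (.inl g) * L = L := by rw [hLl, heg, one_smul]
    refine ⟨L, hmem fun x => ?_, hL0, h1, fun h hh => by rw [hLr, ← hh, heg, one_smul]⟩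
    by_cases hx : .inl g = x
    · subst hx
      exact mem_ann_span (hLg.trans hΛ1)
    · rw [← h1]
      exact mul_mem_ann' (hDsub x) (he0 _ _ hx) _
  have hcount := count I hl hr hnil e
    (fun d a => hmem fun x => by
      by_cases hx : d = x
      · subst hx
        have h1 : e d * a - a * e d = (e d - 1) * a - a * (e d - 1) := by
          rw [sub_mul, mul_sub, one_mul, mul_one]; abel
        rw [h1]
        exact sub_mem (mul_mem_ann' (hDsub d) (he1 d) a) (mul_mem_ann (hDsub d) (he1 d) a)
      · exact sub_mem (mul_mem_ann' (hDsub x) (he0 _ _ hx) a) (mul_mem_ann (hDsub x) (he0 _ _ hx) a))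
    (hmem fun x => by
      rw [← Finset.add_sum_erase _ _ (Finset.mem_univ x), add_sub_right_comm]
      exact add_mem (he1 x) (Submodule.sum_mem _ fun d hd => he0 _ _ (Finset.ne_of_mem_erase hd)))
    (fun d => hmem fun x => by
      by_cases hx : d = x
      · subst hx
        rw [← sub_one_mul]
        exact mul_mem_ann' (hDsub d) (he1 d) _
      · exact sub_mem (mul_mem_ann' (hDsub x) (he0 _ _ hx) _) (he0 _ _ hx))
    (fun d d' hd => hmem fun x => by
      by_cases hx : d = x
      · exact mul_mem_ann (hDsub x) (he0 _ _ fun h => hd (hx.trans h.symm)) _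
      · exact mul_mem_ann' (hDsub x) (he0 _ _ hx) _)
    (fun i => ann (C i)) n (fun i => by rw [finrank_quot_ann, hCrank])
    (fun i => maximal_ann (hC i))
    (fun i a ha => hmem fun x => by
      by_cases hx : .inr i = x
      · subst hx
        exact mul_mem_ann' (hDsub (.inr i)) ha _
      · exact mul_mem_ann (hDsub x) (he0 _ _ hx) _)
    (fun g h d hd => mul_mul_mem_sq ((hGl h).1 h.2).comul_eq_tmul_self (hIG g) (hIG h)
      (hleftG g) (hrightG h) (fun x => hnoskew x g g.2 h h.2) hd)
    (fun g => by
      obtain ⟨x, hxI, hx0, hgx, hxh⟩ := htr' g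
      exact ⟨x, hxI, hx0, hgx, ⟨g * α, (hGl _).2 (((hGl g).1 g.2).mul hα)⟩, hxh _ rfl⟩)
    (fun h => by
      obtain ⟨x, hxI, hx0, -, hxh⟩ :=
        htr' ⟨h * HopfAlgebra.antipode k α, (hGl _).2 (((hGl h).1 h.2).mul hα.antipode)⟩
      exact ⟨x, hxI, hx0, hxh h (by rw [mul_assoc, hα.antipode_mul_cancel, mul_one])⟩)
    (n ⟨0, ht⟩) (fun i => hmono (Fin.mk_le_of_le_val (Nat.zero_le _)))
  rw [finrank_quot_ann, hcoraddim, finrank_conv, ← hcard] at hcount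
  calc _ = G.ncard + ∑ i, n i ^ 2 + 2 * n ⟨0, ht⟩ * G.ncard := by ring
    _ < _ := hcount
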